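/- Let T > 0 and let b, b̃, σ, σ̃ belong to the class M with σ(x) > 0 and σ̃(x) > 0 for all x. For k = 1, 2, let u_k be a classical solution of the parabolic equation associated with (b, σ, f_k) and let ũ_k be a classical solution of the parabolic equation associated with (b̃, σ̃, f_k), where f_k(x) = x^k. If there exist ε ∈ (0, T) and a nonempty open set ω ⊂ ℝ such that u_k(t,x) = ũ_k(t,x) for all t ∈ (0, ε), all x ∈ ω and k = 1, 2, then b(x) = b̃(x) and σ(x) = σ̃(x) for all x ∈ ℝ. -/

import Mathlib

open Set Filter

/-- A function `ψ : ℝ → ℝ` is piecewise analytic if there exist `δ > 0`, a strictly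
increasing sequence `(κ j)_{j ∈ ℤ}` tending to `-∞` at `-∞` and `+∞` at `+∞` with
`κ (j+1) - κ j > δ`, and functions `φ j` analytic on `[κ j, κ (j+1)]`, such that
`ψ = φ j` on `[κ j, κ (j+1))`. -/
def PiecewiseAnalytic (ψ : ℝ → ℝ) : Prop :=
  ∃ (δ : ℝ) (κ : ℤ → ℝ) (φ : ℤ → ℝ → ℝ),
    0 < δ ∧ StrictMono κ ∧
    Tendsto κ atBot atBot ∧ Tendsto κ atTop atTop ∧
    (∀ j : ℤ, δ < κ (j + 1) - κ j) ∧
    (∀ j : ℤ, AnalyticOn ℝ (φ j) (Icc (κ j) (κ (j + 1)))) ∧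
    (∀ j : ℤ, ∀ x ∈ Ico (κ j) (κ (j + 1)), ψ x = φ j x)

/-- The class `M` of Lipschitz-continuous, piecewise analytic functions on `ℝ`. -/
def ClassM (ψ : ℝ → ℝ) : Prop :=
  (∃ K, LipschitzWith K ψ) ∧ PiecewiseAnalytic ψ

/-- `u : [0,T) × ℝ → ℝ` is a classical solution of
`∂ₜ u = (1/2) σ(x)² ∂ₓₓ u + b(x) ∂ₓ u`, `u(0, ·) = f`:
`u`, `∂ₜ u`, `∂ₓ u`, `∂ₓₓ u` exist and are continuous on `[0,T) × ℝ`, the PDE holds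
there, and the initial condition holds. -/
def IsClassicalSolution (T : ℝ) (b σ f : ℝ → ℝ) (u : ℝ → ℝ → ℝ) : Prop :=
  ContinuousOn (fun p : ℝ × ℝ => u p.1 p.2) (Ico 0 T ×ˢ univ) ∧
  (∀ t ∈ Ico 0 T, ∀ x : ℝ, DifferentiableAt ℝ (fun s => u s x) t) ∧
  (∀ t ∈ Ico 0 T, ∀ x : ℝ, DifferentiableAt ℝ (fun y => u t y) x) ∧
  (∀ t ∈ Ico 0 T, ∀ x : ℝ, DifferentiableAt ℝ (deriv (fun y => u t y)) x) ∧
  ContinuousOn (fun p : ℝ × ℝ => deriv (fun s => u s p.2) p.1) (Ico 0 T ×ˢ univ) ∧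
  ContinuousOn (fun p : ℝ × ℝ => deriv (fun y => u p.1 y) p.2) (Ico 0 T ×ˢ univ) ∧
  ContinuousOn (fun p : ℝ × ℝ => deriv (deriv (fun y => u p.1 y)) p.2) (Ico 0 T ×ˢ univ) ∧
  (∀ t ∈ Ico 0 T, ∀ x : ℝ,
    deriv (fun s => u s x) t =
      (1 / 2) * (σ x) ^ 2 * deriv (deriv (fun y => u t y)) x
        + b x * deriv (fun y => u t y) x) ∧
  (∀ x : ℝ, u 0 x = f x)

/-!
Suppose the coefficients `(σ² / 2, b)` and `(σt² / 2, bt)` agree on `[p, x₀]`, where `p` lies in the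
observed set, but not to the right of `x₀`. By one-sided analyticity their difference there is
`(x - x₀) ^ k • g x` with `g x₀ ≠ 0`. The initial data `x` and `x ^ 2` determine a second-order
operator without zeroth-order term, so for one of them, `f` say, the number
`r = g₁(x₀) f''(x₀) + g₂(x₀) f'(x₀)` is nonzero. If `u` and `v` are the two solutions starting at
`f`, then `w = r (u - v)` solves the equation of `u` with a source which, for small times and up to
some `q > x₀`, vanishes left of `x₀` and is at least `(x - x₀) ^ k r² / 2` right of it; also `w`
vanishes at time `0` and has zero Cauchy data at `p`.

Let `W` be the Laplace transform of `w` in time over `[0, τ]`, at frequency `s`. The cut-off leaves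
a boundary term of order `exp (-s τ)`, which the barrier `C exp (-s τ + μ (x - p))` with `s = δ μ²`
absorbs. So `y = barrier - W` satisfies `s y + G ≤ (σ² / 2) y'' + b y'` with `y p > 0`, `y' p ≥ 0`
and a source `G ≥ 0` of order `1 / s` near `q`. This forces `y q` to be bounded below uniformly in
`s`, although `|W| = O(1 / s)` and the barrier tends to `0`: a contradiction as `s → ∞`.

Hence agreement continues from `p` to the right, and after the reflection `x ↦ -x` also to the left.
At `p` itself the coefficients agree by the equations at time `0`.
-/

open scoped Topology Interval

/-! ### Supersolutions with Cauchy data -/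

theorem add_quadratic_le_of_le_flux_deriv {ρ y P P' : ℝ → ℝ} {α β k R : ℝ} (hαβ : α ≤ β)
    (hk : 0 ≤ k) (hρ : ∀ x ∈ Icc α β, 0 < ρ x) (hR : ∀ x ∈ Icc α β, ρ x ≤ R)
    (hy : ∀ x ∈ Icc α β, HasDerivAt y (P x / ρ x) x) (hP : ∀ x ∈ Icc α β, HasDerivAt P (P' x) x)
    (hP' : ∀ x ∈ Icc α β, k ≤ P' x) (hPα : 0 ≤ P α) :
    y α + k / (2 * R) * (β - α) ^ 2 ≤ y β := by
  have hα : α ∈ Icc α β := left_mem_Icc.2 hαβ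
  have flux_ge : ∀ x ∈ Icc α β, k * (x - α) ≤ P x := fun x hx => by
    have := (convex_Icc α β).mul_sub_le_image_sub_of_le_deriv
      (fun z hz => (hP z hz).continuousAt.continuousWithinAt)
      (fun z hz => (hP z (interior_subset hz)).differentiableAt.differentiableWithinAt)
      (fun z hz => (hP z (interior_subset hz)).deriv ▸ hP' z (interior_subset hz)) α hα x hx hx.1
    linarith
  have hz : ∀ x ∈ Icc α β, HasDerivAt (fun x => y x - k / (2 * R) * (x - α) ^ 2)
      (P x / ρ x - k * (x - α) / R) x := fun x hx => by
    refine (hy x hx).sub <| ((((hasDerivAt_id x).sub_const α).pow 2).const_mul _).congr_deriv ?_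
    simp only [id_eq]
    ring
  have hmono : MonotoneOn (fun x => y x - k / (2 * R) * (x - α) ^ 2) (Icc α β) := by
    refine monotoneOn_of_hasDerivWithinAt_nonneg (convex_Icc α β)
      (fun x hx => (hz x hx).continuousAt.continuousWithinAt)
      (fun x hx => (hz x (interior_subset hx)).hasDerivWithinAt) fun x hx => sub_nonneg.2 ?_
    have hx := interior_subset hx
    have hk_nonneg : 0 ≤ k * (x - α) := mul_nonneg hk (sub_nonneg.2 hx.1)
    exact div_le_div₀ (hk_nonneg.trans (flux_ge x hx)) (flux_ge x hx) (hρ x hx) (hR x hx)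
  have := hmono hα (right_mem_Icc.2 hαβ) hαβ
  simp only [sub_self] at this
  linarith

theorem monotoneOn_flux_of_nonneg_where_pos {ρ y P P' : ℝ → ℝ} {p q : ℝ}
    (hρ : ∀ x ∈ Icc p q, 0 < ρ x) (hy : ∀ x ∈ Icc p q, HasDerivAt y (P x / ρ x) x)
    (hP : ∀ x ∈ Icc p q, HasDerivAt P (P' x) x) (hP' : ∀ x ∈ Icc p q, 0 < y x → 0 ≤ P' x)
    (hyp : 0 < y p) (hPp : 0 ≤ P p) :
    MonotoneOn P (Icc p q) ∧ MonotoneOn y (Icc p q) := by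
  have monotone_before : ∀ z ≤ q, (∀ x ∈ Ico p z, 0 < y x) →
      MonotoneOn P (Icc p z) ∧ MonotoneOn y (Icc p z) := by
    intro z hzq hpos
    have hsub : ∀ x ∈ Icc p z, x ∈ Icc p q := fun x hx => ⟨hx.1, hx.2.trans hzq⟩
    have hPmono : MonotoneOn P (Icc p z) := monotoneOn_of_hasDerivWithinAt_nonneg (convex_Icc p z)
      (fun x hx => (hP x (hsub x hx)).continuousAt.continuousWithinAt)
      (fun x hx => (hP x (hsub x (interior_subset hx))).hasDerivWithinAt) fun x hx => by
        rw [interior_Icc] at hx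
        exact hP' x (hsub x (Ioo_subset_Icc_self hx)) (hpos x (Ioo_subset_Ico_self hx))
    refine ⟨hPmono, monotoneOn_of_hasDerivWithinAt_nonneg (convex_Icc p z)
      (fun x hx => (hy x (hsub x hx)).continuousAt.continuousWithinAt)
      (fun x hx => (hy x (hsub x (interior_subset hx))).hasDerivWithinAt) fun x hx => ?_⟩
    have hx := interior_subset hx
    have hp : p ∈ Icc p z := left_mem_Icc.2 (hx.1.trans hx.2)
    exact div_nonneg (hPp.trans (hPmono hp hx hx.1)) (hρ x (hsub x hx)).le
  refine monotone_before q le_rfl fun x hx => ?_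
  by_contra! hneg
  have hcont : ContinuousOn y (Icc p q) := fun x hx => (hy x hx).continuousAt.continuousWithinAt
  obtain ⟨z, ⟨hz, hyz⟩, hleast⟩ := (isCompact_Icc.of_isClosed_subset
    (hcont.preimage_isClosed_of_isClosed isClosed_Icc isClosed_Iic) inter_subset_left
    ).exists_isLeast ⟨x, Ico_subset_Icc_self hx, hneg⟩
  have hbefore : ∀ w ∈ Ico p z, 0 < y w := fun w hw => by
    by_contra! hw_neg
    exact hw.2.not_ge (hleast ⟨⟨hw.1, hw.2.le.trans hz.2⟩, hw_neg⟩)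
  have hle := (monotone_before z hz.2 hbefore).2 (left_mem_Icc.2 hz.1) (right_mem_Icc.2 hz.1) hz.1
  exact hyp.not_ge (hle.trans hyz)

theorem quartic_le_of_flux_supersolution {ρ y P P' G : ℝ → ℝ} {p x₁ q m R s c : ℝ}
    (hp : p ≤ x₁) (hq : x₁ ≤ q) (hm : 0 < m) (hs : 0 < s) (hc : 0 ≤ c)
    (hρ : ∀ x ∈ Icc p q, 0 < ρ x) (hR : ∀ x ∈ Icc p q, ρ x ≤ R)
    (hy : ∀ x ∈ Icc p q, HasDerivAt y (P x / ρ x) x) (hP : ∀ x ∈ Icc p q, HasDerivAt P (P' x) x)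
    (hP' : ∀ x ∈ Icc p q, 0 < y x → m * (s * y x + G x) ≤ P' x)
    (hG : ∀ x ∈ Icc p q, 0 ≤ G x) (hGc : ∀ x ∈ Icc x₁ q, c / s ≤ G x)
    (hyp : 0 < y p) (hPp : 0 ≤ P p) :
    m ^ 2 / (4 * R ^ 2) * ((q - x₁) / 2) ^ 4 * c ≤ y q := by
  have hp_mem : p ∈ Icc p q := left_mem_Icc.2 (hp.trans hq)
  have hRpos : 0 < R := (hρ p hp_mem).trans_le (hR p hp_mem)
  obtain ⟨hPmono, hymono⟩ := monotoneOn_flux_of_nonneg_where_pos hρ hy hP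
    (fun x hx hyx => le_trans (by have := hG x hx; positivity) (hP' x hx hyx)) hyp hPp
  have hypos : ∀ x ∈ Icc p q, 0 < y x := fun x hx => hyp.trans_le (hymono hp_mem hx hx.1)
  have hPnonneg : ∀ x ∈ Icc p q, 0 ≤ P x := fun x hx => hPp.trans (hPmono hp_mem hx hx.1)
  have growth : ∀ α β k, p ≤ α → α ≤ β → β ≤ q → 0 ≤ k →
      (∀ x ∈ Icc α β, k ≤ m * (s * y x + G x)) → k / (2 * R) * (β - α) ^ 2 ≤ y β := by
    intro α β k hα hαβ hβ hk hsource
    have hsub : ∀ x ∈ Icc α β, x ∈ Icc p q := fun x hx => ⟨hα.trans hx.1, hx.2.trans hβ⟩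
    have hα_mem := hsub α (left_mem_Icc.2 hαβ)
    have := add_quadratic_le_of_le_flux_deriv hαβ hk (fun x hx => hρ x (hsub x hx))
      (fun x hx => hR x (hsub x hx)) (fun x hx => hy x (hsub x hx)) (fun x hx => hP x (hsub x hx))
      (fun x hx => (hsource x hx).trans (hP' x (hsub x hx) (hypos x (hsub x hx))))
      (hPnonneg α hα_mem)
    linarith [hypos α hα_mem]
  -- The source `G` alone only yields `y ≳ c / s`; feeding this back through `s * y` removes `s`.
  set mid := (x₁ + q) / 2 with hmid
  have hx₁_mid : x₁ ≤ mid := by linarith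
  have hmid_q : mid ≤ q := by linarith
  have first : m * (c / s) / (2 * R) * (mid - x₁) ^ 2 ≤ y mid := by
    refine growth x₁ mid _ hp hx₁_mid hmid_q (by positivity) fun x hx => ?_
    have := hGc x ⟨hx.1, hx.2.trans hmid_q⟩
    have := mul_pos hs (hypos x ⟨hp.trans hx.1, hx.2.trans hmid_q⟩)
    gcongr
    linarith
  have second : m * (m * c / (2 * R) * (mid - x₁) ^ 2) / (2 * R) * (q - mid) ^ 2 ≤ y q := by
    refine growth mid q _ (hp.trans hx₁_mid) hmid_q le_rfl (by positivity) fun x hx => ?_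
    have hx_mem : x ∈ Icc p q := ⟨hp.trans (hx₁_mid.trans hx.1), hx.2⟩
    have hy_ge := first.trans (hymono ⟨hp.trans hx₁_mid, hmid_q⟩ hx_mem hx.1)
    gcongr
    calc m * c / (2 * R) * (mid - x₁) ^ 2
        = s * (m * (c / s) / (2 * R) * (mid - x₁) ^ 2) := by field_simp
      _ ≤ s * y x := by gcongr
      _ ≤ s * y x + G x := le_add_of_nonneg_right (hG x hx_mem)
  convert second using 1
  rw [hmid]
  field_simp
  ring

/-- The integrating factor `exp (∫ b / a)`, which puts `a ∂² + b ∂` into divergence form: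
`a y'' + b y' = (a / ρ) (ρ y')'`. -/
noncomputable def integratingFactor (a b : ℝ → ℝ) (p x : ℝ) : ℝ :=
  Real.exp (∫ z in p..x, b z / a z)

theorem integratingFactor_pos (a b : ℝ → ℝ) (p x : ℝ) : 0 < integratingFactor a b p x :=
  Real.exp_pos _

theorem hasDerivAt_integratingFactor {a b : ℝ → ℝ} (ha : Continuous a) (hb : Continuous b)
    (ha0 : ∀ x, a x ≠ 0) (p x : ℝ) :
    HasDerivAt (integratingFactor a b p) (integratingFactor a b p x * (b x / a x)) x :=
  ((hb.div ha ha0).integral_hasStrictDerivAt p x).hasDerivAt.exp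

/-- `y`, with first and second derivatives `y'` and `y''`, satisfies `s y + G ≤ a y'' + b y'` on
`[p, q]` with Cauchy data `0 < y p` and `0 ≤ y' p`. -/
structure IsCauchySupersolution (a b : ℝ → ℝ) (p q s : ℝ) (G y y' y'' : ℝ → ℝ) : Prop where
  hasDerivAt : ∀ x, HasDerivAt y (y' x) x
  hasDerivAt₂ : ∀ x, HasDerivAt y' (y'' x) x
  le : ∀ x ∈ Icc p q, s * y x + G x ≤ a x * y'' x + b x * y' x
  pos_left : 0 < y p
  deriv_nonneg_left : 0 ≤ y' p

theorem exists_pos_mul_le_of_isCauchySupersolution {a b : ℝ → ℝ} (ha : Continuous a)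
    (hb : Continuous b) (ha0 : ∀ x, 0 < a x) {p x₁ q : ℝ} (hp : p ≤ x₁) (hq : x₁ < q) :
    ∃ K > 0, ∀ {s c : ℝ} {G y y' y'' : ℝ → ℝ}, 0 < s → 0 ≤ c →
      IsCauchySupersolution a b p q s G y y' y'' →
      (∀ x ∈ Icc p q, 0 ≤ G x) → (∀ x ∈ Icc x₁ q, c / s ≤ G x) → K * c ≤ y q := by
  set ρ := integratingFactor a b p
  have hρ : ∀ x, 0 < ρ x := integratingFactor_pos a b p
  have hρ' := hasDerivAt_integratingFactor ha hb (fun x => (ha0 x).ne') p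
  have hρ_cont : Continuous ρ := continuous_iff_continuousAt.2 fun x => (hρ' x).continuousAt
  have hne : (Icc p q).Nonempty := nonempty_Icc.2 (hp.trans hq.le)
  obtain ⟨z, -, hz⟩ := isCompact_Icc.exists_isMaxOn hne hρ_cont.continuousOn
  obtain ⟨w, -, hw⟩ := isCompact_Icc.exists_isMinOn hne
    (hρ_cont.div ha fun x => (ha0 x).ne').continuousOn
  have hm : 0 < ρ w / a w := div_pos (hρ w) (ha0 w)
  refine ⟨(ρ w / a w) ^ 2 / (4 * ρ z ^ 2) * ((q - x₁) / 2) ^ 4, ?_, ?_⟩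
  · have := hρ z
    have := sub_pos.2 hq
    positivity
  intro s c G y y' y'' hs hc hy hG hGc
  refine quartic_le_of_flux_supersolution (P := fun x => ρ x * y' x) hp hq.le hm hs hc
    (fun x _ => hρ x) (fun x hx => hz hx)
    (fun x _ => (hy.hasDerivAt x).congr_deriv (mul_div_cancel_left₀ _ (hρ x).ne').symm)
    (fun x _ => (hρ' x).mul (hy.hasDerivAt₂ x)) (fun x hx hyx => ?_) hG hGc hy.pos_left
    (mul_nonneg (hρ p).le hy.deriv_nonneg_left)
  have hrhs : 0 ≤ s * y x + G x := add_nonneg (mul_pos hs hyx).le (hG x hx)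
  calc ρ w / a w * (s * y x + G x)
      ≤ ρ x / a x * (a x * y'' x + b x * y' x) :=
        mul_le_mul (hw hx) (hy.le x hx) hrhs (div_pos (hρ x) (ha0 x)).le
    _ = ρ x * (b x / a x) * y' x + ρ x * y'' x := by
        have := (ha0 x).ne'
        field_simp
        ring

/-! ### The truncated Laplace transform -/

theorem hasDerivAt_intervalIntegral_of_continuousOn {E : Type*} [NormedAddCommGroup E]
    [NormedSpace ℝ E] {α β : ℝ} {g g' : ℝ → ℝ → E}
    (hg : ContinuousOn (Function.uncurry g) ([[α, β]] ×ˢ univ))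
    (hg' : ContinuousOn (Function.uncurry g') ([[α, β]] ×ˢ univ))
    (hd : ∀ t ∈ [[α, β]], ∀ x, HasDerivAt (g t) (g' t x) x) (x : ℝ) :
    HasDerivAt (fun x => ∫ t in α..β, g t x) (∫ t in α..β, g' t x) x := by
  have slice : ∀ {h : ℝ → ℝ → E}, ContinuousOn (Function.uncurry h) ([[α, β]] ×ˢ univ) →
      ∀ x, IntervalIntegrable (fun t => h t x) MeasureTheory.volume α β := fun hh x =>
    (hh.uncurry_right x (mem_univ x)).intervalIntegrable
  obtain ⟨C, hC⟩ := (isCompact_uIcc.prod (isCompact_closedBall x 1)).exists_bound_of_continuousOn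
    (hg'.mono (prod_mono_right (subset_univ _)))
  exact (intervalIntegral.hasDerivAt_integral_of_dominated_loc_of_deriv_le
    (F := fun x t => g t x) (F' := fun x t => g' t x) (bound := fun _ => C)
    (Metric.closedBall_mem_nhds x one_pos)
    (Eventually.of_forall fun x => (slice hg x).def'.aestronglyMeasurable) (slice hg x)
    (slice hg' x).def'.aestronglyMeasurable
    (Eventually.of_forall fun t ht z hz => hC (t, z) ⟨uIoc_subset_uIcc ht, hz⟩)
    intervalIntegrable_const
    (Eventually.of_forall fun t ht z _ => hd t (uIoc_subset_uIcc ht) z)).2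

/-- The Laplace transform at `s` of `h` cut off at time `τ`. Truncation makes it available for
functions known only on `[0, τ]`, at the price of the boundary term in `truncLaplace_deriv`. -/
noncomputable def truncLaplace (s τ : ℝ) (h : ℝ → ℝ) : ℝ :=
  ∫ t in (0 : ℝ)..τ, Real.exp (-(s * t)) * h t

section TruncLaplace

variable {s τ : ℝ} {g h : ℝ → ℝ}

theorem truncLaplace_integrand_intervalIntegrable (hτ : 0 ≤ τ) (hh : ContinuousOn h (Icc 0 τ)) :
    IntervalIntegrable (fun t => Real.exp (-(s * t)) * h t) MeasureTheory.volume 0 τ :=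
  (ContinuousOn.mul (by fun_prop) hh).intervalIntegrable_of_Icc hτ

theorem truncLaplace_add (hτ : 0 ≤ τ) (hg : ContinuousOn g (Icc 0 τ))
    (hh : ContinuousOn h (Icc 0 τ)) :
    truncLaplace s τ (fun t => g t + h t) = truncLaplace s τ g + truncLaplace s τ h := by
  simp only [truncLaplace, mul_add]
  exact intervalIntegral.integral_add (truncLaplace_integrand_intervalIntegrable hτ hg)
    (truncLaplace_integrand_intervalIntegrable hτ hh)

theorem truncLaplace_const_mul (c : ℝ) :
    truncLaplace s τ (fun t => c * h t) = c * truncLaplace s τ h := by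
  simp only [truncLaplace, mul_left_comm _ c, intervalIntegral.integral_const_mul]

theorem truncLaplace_eq_zero (hτ : 0 ≤ τ) (hh : ∀ t ∈ Ioc 0 τ, h t = 0) :
    truncLaplace s τ h = 0 :=
  intervalIntegral.integral_zero_ae <| Eventually.of_forall fun t ht => by
    rw [hh t (uIoc_of_le hτ ▸ ht), mul_zero]

theorem truncLaplace_mono (hτ : 0 ≤ τ) (hg : ContinuousOn g (Icc 0 τ))
    (hh : ContinuousOn h (Icc 0 τ)) (hgh : ∀ t ∈ Icc 0 τ, g t ≤ h t) :
    truncLaplace s τ g ≤ truncLaplace s τ h :=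
  intervalIntegral.integral_mono_on hτ (truncLaplace_integrand_intervalIntegrable hτ hg)
    (truncLaplace_integrand_intervalIntegrable hτ hh) fun t ht =>
      mul_le_mul_of_nonneg_left (hgh t ht) (Real.exp_pos _).le

theorem truncLaplace_deriv {h' : ℝ → ℝ} (hτ : 0 ≤ τ) (hh : ∀ t ∈ Icc 0 τ, HasDerivAt h (h' t) t)
    (hh' : ContinuousOn h' (Icc 0 τ)) :
    truncLaplace s τ h' = Real.exp (-(s * τ)) * h τ - h 0 + s * truncLaplace s τ h := by
  have hexp : ∀ t, HasDerivAt (fun t => Real.exp (-(s * t))) (-s * Real.exp (-(s * t))) t :=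
    fun t => ((hasDerivAt_id t).const_mul s).neg.exp.congr_deriv (by
      simp only [id_eq, Pi.neg_apply]
      ring)
  have hparts := intervalIntegral.integral_mul_deriv_eq_deriv_mul (fun t _ => hexp t)
    (by rwa [uIcc_of_le hτ])
    (Continuous.intervalIntegrable (by fun_prop) 0 τ) (hh'.intervalIntegrable_of_Icc hτ)
  simp only [mul_assoc, intervalIntegral.integral_const_mul, mul_zero, neg_zero, Real.exp_zero,
    one_mul] at hparts
  rw [truncLaplace, hparts, truncLaplace]
  ring

theorem truncLaplace_const (hs : s ≠ 0) (hτ : 0 ≤ τ) (c : ℝ) :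
    truncLaplace s τ (fun _ => c) = c * (1 - Real.exp (-(s * τ))) / s := by
  have h := truncLaplace_deriv (s := s) hτ (fun t _ => hasDerivAt_const t c) continuousOn_const
  rw [truncLaplace_eq_zero hτ fun _ _ => rfl] at h
  rw [eq_div_iff hs]
  linarith

theorem neg_truncLaplace_le {C : ℝ} (hs : 0 < s) (hτ : 0 ≤ τ) (hC : 0 ≤ C)
    (hh : ContinuousOn h (Icc 0 τ)) (hCh : ∀ t ∈ Icc 0 τ, |h t| ≤ C) :
    -truncLaplace s τ h ≤ C / s := by
  have hle : truncLaplace s τ (fun _ => -C) ≤ truncLaplace s τ h :=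
    truncLaplace_mono hτ continuousOn_const hh fun t ht => (abs_le.1 (hCh t ht)).1
  have hmass : C * (1 - Real.exp (-(s * τ))) / s ≤ C / s := by
    gcongr
    exact mul_le_of_le_one_right hC (sub_le_self _ (Real.exp_pos _).le)
  rw [truncLaplace_const hs.ne' hτ, neg_mul, neg_div] at hle
  linarith

theorem hasDerivAt_truncLaplace {g g' : ℝ → ℝ → ℝ} (hτ : 0 ≤ τ)
    (hg : ContinuousOn (Function.uncurry g) (Icc 0 τ ×ˢ univ))
    (hg' : ContinuousOn (Function.uncurry g') (Icc 0 τ ×ˢ univ))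
    (hd : ∀ t ∈ Icc 0 τ, ∀ x, HasDerivAt (g t) (g' t x) x) (x : ℝ) :
    HasDerivAt (fun x => truncLaplace s τ fun t => g t x) (truncLaplace s τ fun t => g' t x) x := by
  rw [← uIcc_of_le hτ] at hg hg' hd
  have hexp : Continuous fun z : ℝ × ℝ => Real.exp (-(s * z.1)) := by fun_prop
  exact hasDerivAt_intervalIntegral_of_continuousOn
    (g := fun t x => Real.exp (-(s * t)) * g t x) (g' := fun t x => Real.exp (-(s * t)) * g' t x)
    (hexp.continuousOn.mul hg) (hexp.continuousOn.mul hg') (fun t ht x => (hd t ht x).const_mul _) x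

end TruncLaplace

/-! ### Parabolic equations with zero initial and Cauchy data -/

/-- `w` is of class `C^{1,2}` on `I × ℝ`, with time derivative `wt` and space derivatives `wx`,
`wxx`. The derivatives are explicit arguments, so that they can be integrated in time and evaluated
at reflected or combined functions without returning to `deriv`. -/
structure HasParabolicDerivs (I : Set ℝ) (w wt wx wxx : ℝ → ℝ → ℝ) : Prop where
  continuousOn : ContinuousOn (Function.uncurry w) (I ×ˢ univ)
  continuousOn_time : ContinuousOn (Function.uncurry wt) (I ×ˢ univ)
  continuousOn_space : ContinuousOn (Function.uncurry wx) (I ×ˢ univ)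
  continuousOn_space₂ : ContinuousOn (Function.uncurry wxx) (I ×ˢ univ)
  hasDerivAt_time : ∀ t ∈ I, ∀ x, HasDerivAt (fun s => w s x) (wt t x) t
  hasDerivAt_space : ∀ t ∈ I, ∀ x, HasDerivAt (w t) (wx t x) x
  hasDerivAt_space₂ : ∀ t ∈ I, ∀ x, HasDerivAt (wx t) (wxx t x) x

theorem eventually_le_mul_sq_add_mul {a b : ℝ → ℝ} (ha : Continuous a) (hb : Continuous b)
    (ha0 : ∀ x, 0 < a x) (p q : ℝ) :
    ∃ δ > 0, ∀ᶠ μ : ℝ in atTop, ∀ x ∈ Icc p q, δ * μ ^ 2 + 1 ≤ a x * μ ^ 2 + b x * μ := by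
  obtain hne | hne := (Icc p q).eq_empty_or_nonempty
  · exact ⟨1, one_pos, Eventually.of_forall fun _ => by simp [hne]⟩
  obtain ⟨z, -, hz⟩ := isCompact_Icc.exists_isMinOn hne ha.continuousOn
  obtain ⟨w, -, hw⟩ := isCompact_Icc.exists_isMinOn hne hb.continuousOn
  refine ⟨a z / 2, half_pos (ha0 z), ?_⟩
  have hlin : Tendsto (fun μ => a z / 2 * μ + b w) atTop atTop :=
    tendsto_atTop_add_const_right _ _ (tendsto_id.const_mul_atTop (half_pos (ha0 z)))
  filter_upwards [hlin.eventually_ge_atTop 1, eventually_ge_atTop 1] with μ hμ hμ1 x hx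
  have : 0 ≤ μ := zero_le_one.trans hμ1
  calc a z / 2 * μ ^ 2 + 1
      ≤ a z / 2 * μ ^ 2 + (a z / 2 * μ + b w) * μ := by nlinarith
    _ = a z * μ ^ 2 + b w * μ := by ring
    _ ≤ a x * μ ^ 2 + b x * μ := by gcongr; exacts [hz hx, hw hx]

theorem tendsto_exp_neg_mul_sq_mul_exp {k : ℝ} (hk : 0 < k) (l : ℝ) :
    Tendsto (fun μ : ℝ => Real.exp (-(k * μ ^ 2)) * Real.exp (μ * l)) atTop (𝓝 0) := by
  simp only [← Real.exp_add]
  refine Real.tendsto_exp_atBot.comp ?_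
  have hlin : Tendsto (fun μ => k * μ - l) atTop atTop :=
    tendsto_atTop_add_const_right _ _ (tendsto_id.const_mul_atTop hk)
  refine (tendsto_neg_atTop_atBot.comp (tendsto_id.atTop_mul_atTop₀ hlin)).congr fun μ => ?_
  simp only [Function.comp_apply, id_eq]
  ring

theorem hasDerivAt_exp_mul_sub (μ p x : ℝ) :
    HasDerivAt (fun x => Real.exp (μ * (x - p))) (Real.exp (μ * (x - p)) * μ) x := by
  simpa using (((hasDerivAt_id x).sub_const p).const_mul μ).exp

namespace HasParabolicDerivs

variable {I J : Set ℝ} {w wt wx wxx v vt vx vxx : ℝ → ℝ → ℝ}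

theorem mono (h : HasParabolicDerivs I w wt wx wxx) (hJ : J ⊆ I) :
    HasParabolicDerivs J w wt wx wxx where
  continuousOn := h.continuousOn.mono (prod_mono_left hJ)
  continuousOn_time := h.continuousOn_time.mono (prod_mono_left hJ)
  continuousOn_space := h.continuousOn_space.mono (prod_mono_left hJ)
  continuousOn_space₂ := h.continuousOn_space₂.mono (prod_mono_left hJ)
  hasDerivAt_time t ht := h.hasDerivAt_time t (hJ ht)
  hasDerivAt_space t ht := h.hasDerivAt_space t (hJ ht)
  hasDerivAt_space₂ t ht := h.hasDerivAt_space₂ t (hJ ht)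

theorem deriv_space (h : HasParabolicDerivs I w wt wx wxx) {t : ℝ} (ht : t ∈ I) :
    deriv (w t) = wx t :=
  funext fun x => (h.hasDerivAt_space t ht x).deriv

theorem deriv_deriv_space (h : HasParabolicDerivs I w wt wx wxx) {t : ℝ} (ht : t ∈ I) :
    deriv (deriv (w t)) = wxx t :=
  h.deriv_space ht ▸ funext fun x => (h.hasDerivAt_space₂ t ht x).deriv

theorem const_mul_sub (hw : HasParabolicDerivs I w wt wx wxx)
    (hv : HasParabolicDerivs I v vt vx vxx) (r : ℝ) :
    HasParabolicDerivs I (fun t x => r * (w t x - v t x)) (fun t x => r * (wt t x - vt t x))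
      (fun t x => r * (wx t x - vx t x)) (fun t x => r * (wxx t x - vxx t x)) where
  continuousOn := (hw.continuousOn.sub hv.continuousOn).const_smul r
  continuousOn_time := (hw.continuousOn_time.sub hv.continuousOn_time).const_smul r
  continuousOn_space := (hw.continuousOn_space.sub hv.continuousOn_space).const_smul r
  continuousOn_space₂ := (hw.continuousOn_space₂.sub hv.continuousOn_space₂).const_smul r
  hasDerivAt_time t ht x :=
    ((hw.hasDerivAt_time t ht x).sub (hv.hasDerivAt_time t ht x)).const_mul r
  hasDerivAt_space t ht x :=
    ((hw.hasDerivAt_space t ht x).sub (hv.hasDerivAt_space t ht x)).const_mul r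
  hasDerivAt_space₂ t ht x :=
    ((hw.hasDerivAt_space₂ t ht x).sub (hv.hasDerivAt_space₂ t ht x)).const_mul r

theorem comp_neg (h : HasParabolicDerivs I w wt wx wxx) :
    HasParabolicDerivs I (fun t x => w t (-x)) (fun t x => wt t (-x)) (fun t x => -wx t (-x))
      fun t x => wxx t (-x) := by
  have hneg : Continuous fun z : ℝ × ℝ => (z.1, -z.2) := by fun_prop
  have hmaps : MapsTo (fun z : ℝ × ℝ => (z.1, -z.2)) (I ×ˢ univ) (I ×ˢ univ) :=
    fun z hz => ⟨hz.1, mem_univ _⟩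
  exact
    { continuousOn := h.continuousOn.comp hneg.continuousOn hmaps
      continuousOn_time := h.continuousOn_time.comp hneg.continuousOn hmaps
      continuousOn_space := (h.continuousOn_space.comp hneg.continuousOn hmaps).neg
      continuousOn_space₂ := h.continuousOn_space₂.comp hneg.continuousOn hmaps
      hasDerivAt_time := fun t ht x => h.hasDerivAt_time t ht (-x)
      hasDerivAt_space := fun t ht x =>
        ((h.hasDerivAt_space t ht (-x)).comp x (hasDerivAt_neg x)).congr_deriv (mul_neg_one _)
      hasDerivAt_space₂ := fun t ht x =>
        ((h.hasDerivAt_space₂ t ht (-x)).comp x (hasDerivAt_neg x)).neg.congr_deriv (by ring) }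

section Laplace

variable {τ : ℝ}

theorem truncLaplace_source (h : HasParabolicDerivs (Icc 0 τ) w wt wx wxx) (hτ : 0 ≤ τ) {x : ℝ}
    (h0 : w 0 x = 0) (s α β : ℝ) :
    truncLaplace s τ (fun t => wt t x - (α * wxx t x + β * wx t x)) =
      Real.exp (-(s * τ)) * w τ x + s * truncLaplace s τ (fun t => w t x) -
        (α * truncLaplace s τ (fun t => wxx t x) + β * truncLaplace s τ fun t => wx t x) := by
  have hwt := h.continuousOn_time.uncurry_right x (mem_univ x)
  have hwxx : ContinuousOn (fun t => -α * wxx t x) (Icc 0 τ) :=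
    (h.continuousOn_space₂.uncurry_right x (mem_univ x)).const_smul (-α)
  have hwx : ContinuousOn (fun t => -β * wx t x) (Icc 0 τ) :=
    (h.continuousOn_space.uncurry_right x (mem_univ x)).const_smul (-β)
  have hsplit : (fun t => wt t x - (α * wxx t x + β * wx t x)) =
      fun t => wt t x + (-α * wxx t x + -β * wx t x) := by
    funext t
    ring
  rw [hsplit, truncLaplace_add (h := fun t => -α * wxx t x + -β * wx t x) hτ hwt (hwxx.add hwx),
    truncLaplace_add hτ hwxx hwx, truncLaplace_const_mul, truncLaplace_const_mul,
    truncLaplace_deriv hτ (fun t ht => h.hasDerivAt_time t ht x) hwt, h0]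
  ring

theorem isCauchySupersolution_barrier (h : HasParabolicDerivs (Icc 0 τ) w wt wx wxx) (hτ : 0 ≤ τ)
    {a b : ℝ → ℝ} {p q s μ C : ℝ} (hμ : 0 ≤ μ)
    (hsμ : ∀ x ∈ Icc p q, s + 1 ≤ a x * μ ^ 2 + b x * μ)
    (hC : 0 < C) (hwC : ∀ x ∈ Icc p q, |w τ x| ≤ C) (h0 : ∀ x, w 0 x = 0)
    (hp : ∀ t ∈ Ioc 0 τ, w t p = 0) (hp' : ∀ t ∈ Ioc 0 τ, wx t p = 0) :
    IsCauchySupersolution a b p q s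
      (fun x => truncLaplace s τ fun t => wt t x - (a x * wxx t x + b x * wx t x))
      (fun x => C * Real.exp (-(s * τ)) * Real.exp (μ * (x - p)) - truncLaplace s τ fun t => w t x)
      (fun x => C * Real.exp (-(s * τ)) * (Real.exp (μ * (x - p)) * μ) -
        truncLaplace s τ fun t => wx t x)
      (fun x => C * Real.exp (-(s * τ)) * (Real.exp (μ * (x - p)) * μ * μ) -
        truncLaplace s τ fun t => wxx t x) where
  hasDerivAt x := ((hasDerivAt_exp_mul_sub μ p x).const_mul _).sub
    (hasDerivAt_truncLaplace hτ h.continuousOn h.continuousOn_space h.hasDerivAt_space x)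
  hasDerivAt₂ x := (((hasDerivAt_exp_mul_sub μ p x).mul_const μ).const_mul _).sub
    (hasDerivAt_truncLaplace hτ h.continuousOn_space h.continuousOn_space₂ h.hasDerivAt_space₂ x)
  le x hx := by
    set E := Real.exp (-(s * τ))
    set X := Real.exp (μ * (x - p))
    have hE : 0 < E := Real.exp_pos _
    have hX : 1 ≤ X := Real.one_le_exp (mul_nonneg hμ (sub_nonneg.2 hx.1))
    have hboundary : E * w τ x ≤ C * E * X :=
      calc E * w τ x ≤ E * C := mul_le_mul_of_nonneg_left (abs_le.1 (hwC x hx)).2 hE.le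
        _ = C * E := mul_comm _ _
        _ ≤ C * E * X := le_mul_of_one_le_right (by positivity) hX
    have hweight : (s + 1) * (C * E * X) ≤ (a x * μ ^ 2 + b x * μ) * (C * E * X) :=
      mul_le_mul_of_nonneg_right (hsμ x hx) (by positivity)
    rw [h.truncLaplace_source hτ (h0 x)]
    linarith
  pos_left := by
    rw [truncLaplace_eq_zero hτ hp, sub_zero]
    positivity
  deriv_nonneg_left := by
    rw [truncLaplace_eq_zero hτ hp', sub_zero]
    positivity

theorem exists_eventually_le_of_le_source (h : HasParabolicDerivs (Icc 0 τ) w wt wx wxx)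
    (hτ : 0 < τ) {a b : ℝ → ℝ} (ha : Continuous a) (hb : Continuous b) (ha0 : ∀ x, 0 < a x)
    {p x₁ q c : ℝ} (hpx₁ : p ≤ x₁) (hx₁q : x₁ < q) (hc : 0 ≤ c) (h0 : ∀ x, w 0 x = 0)
    (hp : ∀ t ∈ Ioc 0 τ, w t p = 0) (hp' : ∀ t ∈ Ioc 0 τ, wx t p = 0)
    (hsource : ∀ t ∈ Icc 0 τ, ∀ x ∈ Icc p q, 0 ≤ wt t x - (a x * wxx t x + b x * wx t x))
    (hge : ∀ t ∈ Icc 0 τ, ∀ x ∈ Icc x₁ q, c ≤ wt t x - (a x * wxx t x + b x * wx t x)) :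
    ∃ K > 0, ∃ δ > 0, ∃ C, ∀ᶠ μ : ℝ in atTop, K * (c * (1 - Real.exp (-(δ * τ * μ ^ 2)))) ≤
      C * (Real.exp (-(δ * τ * μ ^ 2)) * Real.exp (μ * (q - p))) + C * (δ * μ ^ 2)⁻¹ := by
  obtain ⟨C, hC⟩ := (isCompact_Icc.prod isCompact_Icc).exists_bound_of_continuousOn
    (h.continuousOn.mono (prod_mono_right (subset_univ (Icc p q))))
  have hwC : ∀ t ∈ Icc 0 τ, ∀ x ∈ Icc p q, |w t x| ≤ max C 1 :=
    fun t ht x hx => (hC (t, x) ⟨ht, hx⟩).trans (le_max_left _ _)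
  obtain ⟨δ, hδ, hbarrier⟩ := eventually_le_mul_sq_add_mul ha hb ha0 p q
  obtain ⟨K, hK, hle⟩ := exists_pos_mul_le_of_isCauchySupersolution ha hb ha0 hpx₁ hx₁q
  have hq : q ∈ Icc p q := right_mem_Icc.2 (hpx₁.trans hx₁q.le)
  have hcont : ∀ x, ContinuousOn (fun t => wt t x - (a x * wxx t x + b x * wx t x)) (Icc 0 τ) :=
    fun x => (h.continuousOn_time.uncurry_right x (mem_univ x)).sub
      (((h.continuousOn_space₂.uncurry_right x (mem_univ x)).const_smul (a x)).add
        ((h.continuousOn_space.uncurry_right x (mem_univ x)).const_smul (b x)))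
  refine ⟨K, hK, δ, hδ, max C 1, ?_⟩
  filter_upwards [hbarrier, eventually_gt_atTop 0] with μ hμ hμ0
  have hs : 0 < δ * μ ^ 2 := by positivity
  rw [mul_right_comm δ τ]
  have hmass : 0 ≤ c * (1 - Real.exp (-(δ * μ ^ 2 * τ))) :=
    mul_nonneg hc (sub_nonneg.2 (Real.exp_le_one_iff.2 (neg_nonpos.2 (by positivity))))
  have hsource_nonneg : ∀ x ∈ Icc p q, 0 ≤ truncLaplace (δ * μ ^ 2) τ
      fun t => wt t x - (a x * wxx t x + b x * wx t x) := fun x hx =>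
    (truncLaplace_eq_zero hτ.le fun _ _ => rfl).symm.trans_le
      (truncLaplace_mono hτ.le continuousOn_const (hcont x) fun t ht => hsource t ht x hx)
  have hsource_ge : ∀ x ∈ Icc x₁ q, c * (1 - Real.exp (-(δ * μ ^ 2 * τ))) / (δ * μ ^ 2) ≤
      truncLaplace (δ * μ ^ 2) τ fun t => wt t x - (a x * wxx t x + b x * wx t x) := fun x hx =>
    (truncLaplace_const hs.ne' hτ.le c).symm.trans_le
      (truncLaplace_mono hτ.le continuousOn_const (hcont x) fun t ht => hge t ht x hx)
  have hupper := hle hs hmass (h.isCauchySupersolution_barrier hτ.le hμ0.le hμ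
    (lt_max_of_lt_right one_pos) (hwC τ (right_mem_Icc.2 hτ.le)) h0 hp hp')
    hsource_nonneg hsource_ge
  have hlower := neg_truncLaplace_le hs hτ.le (zero_le_one.trans (le_max_right C 1))
    (h.continuousOn.uncurry_right q (mem_univ q)) fun t ht => hwC t ht q hq
  rw [div_eq_mul_inv] at hlower
  linarith

theorem nonpos_of_le_source (h : HasParabolicDerivs (Icc 0 τ) w wt wx wxx) (hτ : 0 < τ)
    {a b : ℝ → ℝ} (ha : Continuous a) (hb : Continuous b) (ha0 : ∀ x, 0 < a x) {p x₁ q c : ℝ}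
    (hpx₁ : p ≤ x₁) (hx₁q : x₁ < q) (h0 : ∀ x, w 0 x = 0)
    (hp : ∀ t ∈ Ioc 0 τ, w t p = 0) (hp' : ∀ t ∈ Ioc 0 τ, wx t p = 0)
    (hsource : ∀ t ∈ Icc 0 τ, ∀ x ∈ Icc p q, 0 ≤ wt t x - (a x * wxx t x + b x * wx t x))
    (hge : ∀ t ∈ Icc 0 τ, ∀ x ∈ Icc x₁ q, c ≤ wt t x - (a x * wxx t x + b x * wx t x)) :
    c ≤ 0 := by
  by_contra! hc
  obtain ⟨K, hK, δ, hδ, C, hbound⟩ :=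
    h.exists_eventually_le_of_le_source hτ ha hb ha0 hpx₁ hx₁q hc.le h0 hp hp' hsource hge
  have hexp := tendsto_exp_neg_mul_sq_mul_exp (mul_pos hδ hτ) 0
  simp only [mul_zero, Real.exp_zero, mul_one] at hexp
  have hinv : Tendsto (fun μ : ℝ => (δ * μ ^ 2)⁻¹) atTop (𝓝 0) :=
    tendsto_inv_atTop_zero.comp ((tendsto_pow_atTop two_ne_zero).const_mul_atTop hδ)
  have hlim := le_of_tendsto_of_tendsto (((hexp.const_sub 1).const_mul c).const_mul K)
    (((tendsto_exp_neg_mul_sq_mul_exp (mul_pos hδ hτ) (q - p)).const_mul _).add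
      (hinv.const_mul _)) hbound
  simp only [sub_zero, mul_one, mul_zero, add_zero] at hlim
  exact (mul_pos hK hc).not_ge hlim

end Laplace

end HasParabolicDerivs

/-! ### One-sided analytic functions -/

/-- `f` is analytic up to the boundary on each side of every point. Both one-sided germs take the
value `f x` at `x`, so this includes continuity, but the two germs need not match further. -/
def OneSidedAnalytic {E : Type*} [NormedAddCommGroup E] [NormedSpace ℝ E] (f : ℝ → E) : Prop :=
  ∀ x, AnalyticWithinAt ℝ f (Ici x) x ∧ AnalyticWithinAt ℝ f (Iic x) x

namespace OneSidedAnalytic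

variable {E : Type*} [NormedAddCommGroup E] [NormedSpace ℝ E] {f : ℝ → E}

theorem continuous (hf : OneSidedAnalytic f) : Continuous f :=
  continuous_iff_continuousAt.2 fun x => continuousAt_iff_continuous_left_right.2
    ⟨(hf x).2.continuousWithinAt, (hf x).1.continuousWithinAt⟩

theorem comp_neg (hf : OneSidedAnalytic f) : OneSidedAnalytic fun x => f (-x) := fun x =>
  ⟨(hf (-x)).2.comp (g := f) analyticWithinAt_id.neg fun _ hz => neg_le_neg (mem_Ici.1 hz),
    (hf (-x)).1.comp (g := f) analyticWithinAt_id.neg fun _ hz => neg_le_neg (mem_Iic.1 hz)⟩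

theorem neg (hf : OneSidedAnalytic f) : OneSidedAnalytic fun x => -f x :=
  fun x => ⟨(hf x).1.neg, (hf x).2.neg⟩

end OneSidedAnalytic

theorem exists_and_not_add_one {P : ℤ → Prop} (hbot : ∀ᶠ j in atBot, P j)
    (htop : ∀ᶠ j in atTop, ¬P j) : ∃ j, P j ∧ ¬P (j + 1) := by
  obtain ⟨N, hN⟩ := eventually_atTop.1 htop
  obtain ⟨j, hj, hmax⟩ := Int.exists_greatest_of_bdd
    ⟨N, fun z hz => le_of_not_ge fun hNz => hN z hNz hz⟩ hbot.exists
  exact ⟨j, hj, fun hj1 => (lt_add_one j).not_ge (hmax _ hj1)⟩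

theorem ClassM.oneSidedAnalytic {ψ : ℝ → ℝ} (h : ClassM ψ) : OneSidedAnalytic ψ := by
  obtain ⟨⟨K, hK⟩, -, κ, φ, -, hmono, hbot, htop, -, hφ, hψ⟩ := h
  have piece : ∀ j, ∀ x ∈ Icc (κ j) (κ (j + 1)),
      AnalyticWithinAt ℝ ψ (Icc (κ j) (κ (j + 1))) x := fun j x hx => by
    have heq : EqOn ψ (φ j) (Icc (κ j) (κ (j + 1))) :=
      EqOn.of_subset_closure (hψ j) hK.continuous.continuousOn (hφ j).continuousOn
        Ico_subset_Icc_self (closure_Ico (hmono (lt_add_one j)).ne).ge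
    exact (hφ j x hx).congr heq (heq hx)
  intro x
  constructor
  · obtain ⟨j, hj, hj1⟩ := exists_and_not_add_one (hbot.eventually_le_atBot x)
      ((htop.eventually_gt_atTop x).mono fun _ => not_le.2)
    exact (piece j x ⟨hj, (not_le.1 hj1).le⟩).mono_of_mem_nhdsWithin
      (mem_of_superset (Icc_mem_nhdsGE (not_le.1 hj1)) (Icc_subset_Icc_left hj))
  · obtain ⟨j, hj, hj1⟩ := exists_and_not_add_one (hbot.eventually_lt_atBot x)
      ((htop.eventually_ge_atTop x).mono fun _ => not_lt.2)
    exact (piece j x ⟨hj.le, not_lt.1 hj1⟩).mono_of_mem_nhdsWithin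
      (mem_of_superset (Icc_mem_nhdsLE hj) (Icc_subset_Icc_right (not_lt.1 hj1)))

theorem eventually_eq_zero_or_eq_pow_smul {E : Type*} [NormedAddCommGroup E] [NormedSpace ℝ E]
    [CompleteSpace E] {D : ℝ → E} {s : Set ℝ} {x₀ : ℝ} (hx₀ : x₀ ∈ s)
    (hD : AnalyticWithinAt ℝ D s x₀) :
    (∀ᶠ x in 𝓝[s] x₀, D x = 0) ∨ ∃ (k : ℕ) (g : ℝ → E), ContinuousAt g x₀ ∧ g x₀ ≠ 0 ∧
      ∀ᶠ x in 𝓝[s] x₀, D x = (x - x₀) ^ k • g x := by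
  obtain ⟨F, hDF, hF⟩ := analyticWithinAt_iff_exists_analyticAt.1 hD
  rw [insert_eq_of_mem hx₀] at hDF
  refine or_iff_not_imp_left.2 fun hne => ?_
  obtain ⟨k, g, hg, hg0, hFg⟩ := hF.exists_eventuallyEq_pow_smul_nonzero_iff.2 fun hzero =>
    hne (hDF.trans (hzero.filter_mono nhdsWithin_le_nhds))
  exact ⟨k, g, hg.continuousAt, hg0, hDF.trans (hFg.filter_mono nhdsWithin_le_nhds)⟩

/-! ### Uniqueness of the coefficients -/

/-- The coefficients `(σ² / 2, b)` of `∂ₓₓ` and `∂ₓ` in the generator of the diffusion. -/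
noncomputable def generatorCoeffs (b σ : ℝ → ℝ) (x : ℝ) : ℝ × ℝ :=
  (1 / 2 * σ x ^ 2, b x)

section GeneratorCoeffs

variable {b σ bt σt : ℝ → ℝ}

theorem oneSidedAnalytic_generatorCoeffs (hb : OneSidedAnalytic b) (hσ : OneSidedAnalytic σ) :
    OneSidedAnalytic (generatorCoeffs b σ) := fun x =>
  ⟨(analyticWithinAt_const.mul ((hσ x).1.pow 2)).prod (hb x).1,
    (analyticWithinAt_const.mul ((hσ x).2.pow 2)).prod (hb x).2⟩

theorem generatorCoeffs_eq_iff {x : ℝ} (hσ : 0 ≤ σ x) (hσt : 0 ≤ σt x) :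
    generatorCoeffs b σ x = generatorCoeffs bt σt x ↔ b x = bt x ∧ σ x = σt x := by
  have hhalf : (1 / 2 : ℝ) ≠ 0 := by norm_num
  rw [generatorCoeffs, generatorCoeffs, Prod.mk.injEq, and_comm, mul_right_inj' hhalf,
    sq_eq_sq₀ hσ hσt]

end GeneratorCoeffs

theorem isClassicalSolution_iff {T : ℝ} {b σ f : ℝ → ℝ} {u : ℝ → ℝ → ℝ} :
    IsClassicalSolution T b σ f u ↔ ∃ ut ux uxx, HasParabolicDerivs (Ico 0 T) u ut ux uxx ∧
      (∀ t ∈ Ico 0 T, ∀ x, ut t x =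
        (generatorCoeffs b σ x).1 * uxx t x + (generatorCoeffs b σ x).2 * ux t x) ∧
      u 0 = f := by
  constructor
  · rintro ⟨hc, ht, hx, hxx, hct, hcx, hcxx, hpde, hinit⟩
    exact ⟨fun t x => deriv (fun s => u s x) t, fun t => deriv (u t), fun t => deriv (deriv (u t)),
      ⟨hc, hct, hcx, hcxx, fun t h x => (ht t h x).hasDerivAt,
        fun t h x => (hx t h x).hasDerivAt, fun t h x => (hxx t h x).hasDerivAt⟩,
      hpde, funext hinit⟩
  · rintro ⟨ut, ux, uxx, h, hpde, hinit⟩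
    have hut : ∀ t ∈ Ico 0 T, ∀ x, deriv (fun s => u s x) t = ut t x :=
      fun t ht x => (h.hasDerivAt_time t ht x).deriv
    refine ⟨h.continuousOn, fun t ht x => (h.hasDerivAt_time t ht x).differentiableAt,
      fun t ht x => (h.hasDerivAt_space t ht x).differentiableAt,
      fun t ht x => h.deriv_space ht ▸ (h.hasDerivAt_space₂ t ht x).differentiableAt,
      h.continuousOn_time.congr fun z hz => hut z.1 hz.1 z.2,
      h.continuousOn_space.congr fun z hz => congrFun (h.deriv_space hz.1) z.2,
      h.continuousOn_space₂.congr fun z hz => congrFun (h.deriv_deriv_space hz.1) z.2,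
      fun t ht x => ?_, congrFun hinit⟩
    rw [hut t ht x, h.deriv_deriv_space ht, h.deriv_space ht]
    exact hpde t ht x

theorem IsClassicalSolution.comp_neg {T : ℝ} {b σ f : ℝ → ℝ} {u : ℝ → ℝ → ℝ}
    (hu : IsClassicalSolution T b σ f u) :
    IsClassicalSolution T (fun x => -b (-x)) (fun x => σ (-x)) (fun x => f (-x))
      fun t x => u t (-x) := by
  obtain ⟨ut, ux, uxx, h, hpde, hinit⟩ := isClassicalSolution_iff.1 hu
  refine isClassicalSolution_iff.2 ⟨_, _, _, h.comp_neg, fun t ht x => ?_, ?_⟩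
  · simp only [hpde t ht, generatorCoeffs, neg_mul_neg]
  · rw [hinit]

/-- The initial data `f` determine a second-order operator without zeroth-order term:
at every point, no nonzero operator `c.1 ∂² + c.2 ∂` annihilates all of them. -/
def SeparatesCoefficients {ι : Type*} (f : ι → ℝ → ℝ) : Prop :=
  ∀ (x : ℝ) (c : ℝ × ℝ), (∀ i, c.1 * deriv (deriv (f i)) x + c.2 * deriv (f i) x = 0) → c = 0

theorem SeparatesCoefficients.comp_neg {ι : Type*} {f : ι → ℝ → ℝ}
    (hf : SeparatesCoefficients f) : SeparatesCoefficients fun i x => f i (-x) := by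
  intro x c hc
  have hneg : (c.1, -c.2) = 0 := hf (-x) _ fun i => by
    have := hc i
    have hderiv : deriv (fun x => f i (-x)) = fun x => -deriv (f i) (-x) :=
      funext fun x => deriv_comp_neg (f i) x
    rw [hderiv, deriv.fun_neg, deriv_comp_neg, neg_neg] at this
    linarith
  have := Prod.mk_eq_zero.1 hneg
  exact Prod.ext this.1 (neg_eq_zero.1 this.2)

theorem separatesCoefficients_moments :
    SeparatesCoefficients ![fun x => x ^ 1, fun x => x ^ 2] := by
  intro x c hc
  have hderiv₁ : deriv (fun x : ℝ => x ^ 1) = fun _ => 1 := by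
    simp only [pow_one, deriv_id'']
  have hderiv₂ : deriv (fun x : ℝ => x ^ 2) = fun x => 2 * x := by
    funext x
    simp
  have h₁ : c.2 = 0 := by
    simpa [hderiv₁] using hc 0
  have h₂ : c.1 = 0 := by
    simpa [hderiv₂, h₁] using hc 1
  exact Prod.ext h₂ h₁

theorem exists_rectangle_of_eventually_nhdsGE {P : ℝ × ℝ → Prop} {t₀ x₀ ε : ℝ} (hε : t₀ < ε)
    (hP : ∀ᶠ z in 𝓝[≥] t₀ ×ˢ 𝓝[≥] x₀, P z) :
    ∃ τ ∈ Ioo t₀ ε, ∃ q > x₀, ∀ t ∈ Icc t₀ τ, ∀ x ∈ Icc x₀ q, P (t, x) := by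
  obtain ⟨⟨τ, q⟩, ⟨hτ, hq⟩, hP⟩ :=
    (nhdsGE_basis_Icc.prod nhdsGE_basis_Icc).eventually_iff.1 hP
  obtain ⟨τ', hτ', hτ'_lt⟩ := exists_between (lt_min hτ hε)
  exact ⟨τ', ⟨hτ', hτ'_lt.trans_le (min_le_right _ _)⟩, q, hq, fun t ht x hx =>
    hP ⟨⟨ht.1, ht.2.trans (hτ'_lt.le.trans (min_le_left _ _))⟩, hx⟩⟩

theorem HasParabolicDerivs.tendsto_apply_space {T x₀ : ℝ} {v vt vx vxx : ℝ → ℝ → ℝ}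
    {g : ℝ → ℝ × ℝ} (hT : 0 < T) (hv : HasParabolicDerivs (Ico 0 T) v vt vx vxx)
    (hg : ContinuousAt g x₀) :
    Tendsto (fun z : ℝ × ℝ => (g z.2).1 * vxx z.1 z.2 + (g z.2).2 * vx z.1 z.2)
      (𝓝[≥] 0 ×ˢ 𝓝[≥] x₀) (𝓝 ((g x₀).1 * vxx 0 x₀ + (g x₀).2 * vx 0 x₀)) := by
  have hmem : ((0 : ℝ), x₀) ∈ Ico 0 T ×ˢ univ := ⟨left_mem_Ico.2 hT, mem_univ x₀⟩
  have hle : 𝓝[≥] (0 : ℝ) ×ˢ 𝓝[≥] x₀ ≤ 𝓝[Ico 0 T ×ˢ univ] (0, x₀) := by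
    rw [nhdsWithin_prod_eq, nhdsWithin_Ico_eq_nhdsGE hT]
    exact prod_mono le_rfl (nhdsWithin_mono _ (subset_univ _))
  have hg' : Tendsto (fun z : ℝ × ℝ => g z.2) (𝓝[≥] 0 ×ˢ 𝓝[≥] x₀) (𝓝 (g x₀)) :=
    hg.tendsto.comp (tendsto_snd.mono_right nhdsWithin_le_nhds)
  exact (((continuous_fst.tendsto _).comp hg').mul
    ((hv.continuousOn_space₂ _ hmem).mono_left hle)).add
      (((continuous_snd.tendsto _).comp hg').mul ((hv.continuousOn_space _ hmem).mono_left hle))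

theorem HasParabolicDerivs.exists_rectangle_pow_mul_le {T ε x₀ r : ℝ} {v vt vx vxx : ℝ → ℝ → ℝ}
    {c g : ℝ → ℝ × ℝ} {k : ℕ} (hε : ε ∈ Ioo 0 T)
    (hv : HasParabolicDerivs (Ico 0 T) v vt vx vxx) (hg : ContinuousAt g x₀)
    (hgerm : ∀ᶠ x in 𝓝[≥] x₀, c x = (x - x₀) ^ k • g x) (hr : r ≠ 0)
    (hr_eq : (g x₀).1 * vxx 0 x₀ + (g x₀).2 * vx 0 x₀ = r) :
    ∃ τ ∈ Ioo 0 ε, ∃ q > x₀, ∀ t ∈ Icc 0 τ, ∀ x ∈ Icc x₀ q,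
      (x - x₀) ^ k * (r ^ 2 / 2) ≤ r * ((c x).1 * vxx t x + (c x).2 * vx t x) := by
  have hr_sq : 0 < r ^ 2 / 2 := by positivity
  have hnear : ∀ᶠ z : ℝ × ℝ in 𝓝[≥] 0 ×ˢ 𝓝[≥] x₀,
      r ^ 2 / 2 ≤ r * ((g z.2).1 * vxx z.1 z.2 + (g z.2).2 * vx z.1 z.2) :=
    ((hv.tendsto_apply_space (hε.1.trans hε.2) hg).const_mul r).eventually_const_le
      (by rw [hr_eq]; linarith [sq r])
  obtain ⟨τ, hτ, q, hq, hrect⟩ :=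
    exists_rectangle_of_eventually_nhdsGE hε.1 (hnear.and (hgerm.prod_inr _))
  refine ⟨τ, hτ, q, hq, fun t ht x hx => ?_⟩
  obtain ⟨hle, hc⟩ := hrect t ht x hx
  have hpow : 0 ≤ (x - x₀) ^ k := pow_nonneg (sub_nonneg.2 hx.1) k
  refine (mul_le_mul_of_nonneg_left hle hpow).trans_eq ?_
  simp only [hc, Prod.smul_fst, Prod.smul_snd, smul_eq_mul]
  ring

section Uniqueness

variable {T ε p : ℝ} {b bt σ σt f : ℝ → ℝ} {u v : ℝ → ℝ → ℝ}

theorem generatorCoeffs_sub_annihilates_of_eq (hε : ε ∈ Ioo 0 T)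
    (hu : IsClassicalSolution T b σ f u) (hv : IsClassicalSolution T bt σt f v)
    (huv : ∀ t ∈ Ioo 0 ε, u t p = v t p) :
    (generatorCoeffs b σ p - generatorCoeffs bt σt p).1 * deriv (deriv f) p +
      (generatorCoeffs b σ p - generatorCoeffs bt σt p).2 * deriv f p = 0 := by
  obtain ⟨ut, ux, uxx, hu, hupde, hu0⟩ := isClassicalSolution_iff.1 hu
  obtain ⟨vt, vx, vxx, hv, hvpde, hv0⟩ := isClassicalSolution_iff.1 hv
  have h0 : (0 : ℝ) ∈ Ico 0 T := left_mem_Ico.2 (hε.1.trans hε.2)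
  have h0ε : (0 : ℝ) ∈ Ico 0 ε := left_mem_Ico.2 hε.1
  have huv' : ∀ t ∈ Ico 0 ε, u t p = v t p := fun t ht => by
    obtain rfl | ht0 := ht.1.eq_or_lt
    · rw [hu0, hv0]
    · exact huv t ⟨ht0, ht.2⟩
  have htime : ut 0 p = vt 0 p := (uniqueDiffOn_Ico 0 ε 0 h0ε).eq_deriv _
    (hu.hasDerivAt_time 0 h0 p).hasDerivWithinAt
    ((hv.hasDerivAt_time 0 h0 p).hasDerivWithinAt.congr huv' (huv' 0 h0ε))
  rw [hupde 0 h0, hvpde 0 h0, ← hu.deriv_deriv_space h0, ← hv.deriv_deriv_space h0,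
    ← hu.deriv_space h0, ← hv.deriv_space h0, hu0, hv0] at htime
  simp only [Prod.fst_sub, Prod.snd_sub]
  linarith

theorem leadingCoeff_annihilates (hε : ε ∈ Ioo 0 T)
    (hu : IsClassicalSolution T b σ f u) (hv : IsClassicalSolution T bt σt f v)
    (hb : Continuous b) (hσ : Continuous σ) (hσ0 : ∀ x, 0 < σ x)
    (hval : ∀ t ∈ Ioo 0 ε, u t p = v t p) (hderiv : ∀ t ∈ Ioo 0 ε, deriv (u t) p = deriv (v t) p)
    {x₀ : ℝ} (hpx₀ : p ≤ x₀)
    (heq : ∀ x ∈ Icc p x₀, generatorCoeffs b σ x - generatorCoeffs bt σt x = 0) {k : ℕ}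
    {g : ℝ → ℝ × ℝ} (hg : ContinuousAt g x₀) (hgerm : ∀ᶠ x in 𝓝[≥] x₀,
      generatorCoeffs b σ x - generatorCoeffs bt σt x = (x - x₀) ^ k • g x) :
    (g x₀).1 * deriv (deriv f) x₀ + (g x₀).2 * deriv f x₀ = 0 := by
  obtain ⟨ut, ux, uxx, hu, hupde, hu0⟩ := isClassicalSolution_iff.1 hu
  obtain ⟨vt, vx, vxx, hv, hvpde, hv0⟩ := isClassicalSolution_iff.1 hv
  have h0 : (0 : ℝ) ∈ Ico 0 T := left_mem_Ico.2 (hε.1.trans hε.2)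
  rw [← hv0, hv.deriv_deriv_space h0, hv.deriv_space h0]
  by_contra hr
  obtain ⟨τ, hτ, q, hq, source_ge⟩ := hv.exists_rectangle_pow_mul_le hε hg hgerm hr rfl
  set r := (g x₀).1 * vxx 0 x₀ + (g x₀).2 * vx 0 x₀
  have hτT : Icc 0 τ ⊆ Ico 0 T := Icc_subset_Ico_right (hτ.2.trans hε.2)
  have hτε : Ioc 0 τ ⊆ Ioo 0 ε := Ioc_subset_Ioo_right hτ.2
  have source_eq : ∀ t ∈ Icc 0 τ, ∀ x, r * (ut t x - vt t x) -
      ((generatorCoeffs b σ x).1 * (r * (uxx t x - vxx t x)) +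
        (generatorCoeffs b σ x).2 * (r * (ux t x - vx t x))) =
      r * ((generatorCoeffs b σ x - generatorCoeffs bt σt x).1 * vxx t x +
        (generatorCoeffs b σ x - generatorCoeffs bt σt x).2 * vx t x) := fun t ht x => by
    rw [hupde t (hτT ht), hvpde t (hτT ht), Prod.fst_sub, Prod.snd_sub]
    ring
  obtain ⟨x₁, hx₀₁, hx₁q⟩ := exists_between hq
  have hpow : 0 < (x₁ - x₀) ^ k := pow_pos (sub_pos.2 hx₀₁) k
  refine (mul_pos hpow (by positivity : 0 < r ^ 2 / 2)).not_ge <|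
    ((hu.const_mul_sub hv r).mono hτT).nonpos_of_le_source hτ.1
      (a := fun x => (generatorCoeffs b σ x).1) (b := fun x => (generatorCoeffs b σ x).2)
      (continuous_const.mul (hσ.pow 2)) hb (fun x => mul_pos one_half_pos (pow_pos (hσ0 x) 2))
      (hpx₀.trans hx₀₁.le) hx₁q (fun x => by rw [hu0, hv0, sub_self, mul_zero])
      (fun t ht => by rw [hval t (hτε ht), sub_self, mul_zero])
      (fun t ht => ?_) (fun t ht x hx => ?_) fun t ht x hx => ?_
  · have htT := hτT (Ioc_subset_Icc_self ht)
    rw [← hu.deriv_space htT, ← hv.deriv_space htT, hderiv t (hτε ht), sub_self, mul_zero]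
  · rw [source_eq t ht x]
    obtain hx₀ | hx₀ := le_total x x₀
    · simp [heq x ⟨hx.1, hx₀⟩]
    · exact le_trans (by have := sub_nonneg.2 hx₀; positivity) (source_ge t ht x ⟨hx₀, hx.2⟩)
  · rw [source_eq t ht x]
    refine le_trans ?_ (source_ge t ht x ⟨hx₀₁.le.trans hx.1, hx.2⟩)
    gcongr
    exact hx.1

theorem generatorCoeffs_eq_of_le {ι : Type*} {f : ι → ℝ → ℝ} {u v : ι → ℝ → ℝ → ℝ}
    (hε : ε ∈ Ioo 0 T) (hb : OneSidedAnalytic b) (hbt : OneSidedAnalytic bt)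
    (hσ : OneSidedAnalytic σ) (hσt : OneSidedAnalytic σt) (hσ0 : ∀ x, 0 < σ x)
    (hf : SeparatesCoefficients f) (hu : ∀ i, IsClassicalSolution T b σ (f i) (u i))
    (hv : ∀ i, IsClassicalSolution T bt σt (f i) (v i))
    (hval : ∀ i, ∀ t ∈ Ioo 0 ε, u i t p = v i t p)
    (hderiv : ∀ i, ∀ t ∈ Ioo 0 ε, deriv (u i t) p = deriv (v i t) p) {x : ℝ} (hpx : p ≤ x) :
    generatorCoeffs b σ x = generatorCoeffs bt σt x := by
  set D := fun x => generatorCoeffs b σ x - generatorCoeffs bt σt x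
  have hc := oneSidedAnalytic_generatorCoeffs hb hσ
  have hct := oneSidedAnalytic_generatorCoeffs hbt hσt
  have hclosed : IsClosed ({x | D x = 0} ∩ Icc p x) :=
    (isClosed_eq (hc.continuous.sub hct.continuous) continuous_const).inter isClosed_Icc
  have hp : D p = 0 := hf p _ fun i =>
    generatorCoeffs_sub_annihilates_of_eq hε (hu i) (hv i) (hval i)
  refine sub_eq_zero.1 (hclosed.Icc_subset_of_forall_mem_nhdsGT_of_Icc_subset hp
    (fun x₀ hx₀ hzero => ?_) (right_mem_Icc.2 hpx))
  refine nhdsWithin_mono x₀ Ioi_subset_Ici_self ?_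
  obtain h | ⟨k, g, hg, hg0, hgerm⟩ :=
    eventually_eq_zero_or_eq_pow_smul self_mem_Ici ((hc x₀).1.sub (hct x₀).1)
  · exact h
  · exact absurd (hf x₀ _ fun i => leadingCoeff_annihilates hε (hu i) (hv i) hb.continuous
      hσ.continuous hσ0 (hval i) (hderiv i) hx₀.1 (fun x hx => hzero hx) hg hgerm) hg0

end Uniqueness

theorem drift_diffusion_uniqueness_general {ι : Type*} {T ε p : ℝ} {b bt σ σt : ℝ → ℝ}
    {f : ι → ℝ → ℝ} {u v : ι → ℝ → ℝ → ℝ} (hε : ε ∈ Ioo 0 T)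
    (hb : OneSidedAnalytic b) (hbt : OneSidedAnalytic bt)
    (hσ : OneSidedAnalytic σ) (hσt : OneSidedAnalytic σt)
    (hσ0 : ∀ x, 0 < σ x) (hσt0 : ∀ x, 0 ≤ σt x) (hf : SeparatesCoefficients f)
    (hu : ∀ i, IsClassicalSolution T b σ (f i) (u i))
    (hv : ∀ i, IsClassicalSolution T bt σt (f i) (v i))
    (hval : ∀ i, ∀ t ∈ Ioo 0 ε, u i t p = v i t p)
    (hderiv : ∀ i, ∀ t ∈ Ioo 0 ε, deriv (u i t) p = deriv (v i t) p) (x : ℝ) :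
    b x = bt x ∧ σ x = σt x := by
  obtain hpx | hxp := le_total p x
  · exact (generatorCoeffs_eq_iff (hσ0 x).le (hσt0 x)).1
      (generatorCoeffs_eq_of_le hε hb hbt hσ hσt hσ0 hf hu hv hval hderiv hpx)
  · have hreflected := generatorCoeffs_eq_of_le (p := -p) (x := -x) hε hb.comp_neg.neg
      hbt.comp_neg.neg hσ.comp_neg hσt.comp_neg (fun x => hσ0 (-x)) hf.comp_neg
      (fun i => (hu i).comp_neg) (fun i => (hv i).comp_neg)
      (fun i t ht => by simpa using hval i t ht)
      (fun i t ht => by simpa [deriv_comp_neg] using hderiv i t ht) (neg_le_neg hxp)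
    have := (generatorCoeffs_eq_iff (σ := fun x => σ (-x)) (σt := fun x => σt (-x))
      (hσ0 _).le (hσt0 _)).1 hreflected
    simpa using this

/-- Theorem 3: both drift and diffusion coefficients are uniquely determined by
observation of the first and second moments on a small time-space cylinder. -/
theorem drift_diffusion_uniqueness
    (T : ℝ) (hT : 0 < T)
    (b bt sigma sigmat : ℝ → ℝ)
    (hb : ClassM b) (hbt : ClassM bt)
    (hs : ClassM sigma) (hst : ClassM sigmat)
    (hspos : ∀ x, 0 < sigma x) (hstpos : ∀ x, 0 < sigmat x)
    (u₁ u₂ ut₁ ut₂ : ℝ → ℝ → ℝ)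
    (hu₁ : IsClassicalSolution T b sigma (fun x => x ^ 1) u₁)
    (hu₂ : IsClassicalSolution T b sigma (fun x => x ^ 2) u₂)
    (hut₁ : IsClassicalSolution T bt sigmat (fun x => x ^ 1) ut₁)
    (hut₂ : IsClassicalSolution T bt sigmat (fun x => x ^ 2) ut₂)
    (ε : ℝ) (hε : ε ∈ Ioo 0 T)
    (ω : Set ℝ) (hω : IsOpen ω) (hωne : ω.Nonempty)
    (hobs₁ : ∀ t ∈ Ioo 0 ε, ∀ x ∈ ω, u₁ t x = ut₁ t x)
    (hobs₂ : ∀ t ∈ Ioo 0 ε, ∀ x ∈ ω, u₂ t x = ut₂ t x) :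
    ∀ x : ℝ, b x = bt x ∧ sigma x = sigmat x := by
  obtain ⟨p, hp⟩ := hωne
  have hderiv : ∀ {u v : ℝ → ℝ → ℝ}, (∀ t ∈ Ioo 0 ε, ∀ x ∈ ω, u t x = v t x) →
      ∀ t ∈ Ioo 0 ε, deriv (u t) p = deriv (v t) p := fun huv t ht =>
    EventuallyEq.deriv_eq ((hω.eventually_mem hp).mono (huv t ht))
  exact drift_diffusion_uniqueness_general (p := p) (u := ![u₁, u₂]) (v := ![ut₁, ut₂]) hε
    hb.oneSidedAnalytic hbt.oneSidedAnalytic hs.oneSidedAnalytic hst.oneSidedAnalytic hspos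
    (fun x => (hstpos x).le) separatesCoefficients_moments
    (Fin.forall_fin_two.2 ⟨hu₁, hu₂⟩) (Fin.forall_fin_two.2 ⟨hut₁, hut₂⟩)
    (Fin.forall_fin_two.2 ⟨fun t ht => hobs₁ t ht p hp, fun t ht => hobs₂ t ht p hp⟩)
    (Fin.forall_fin_two.2 ⟨hderiv hobs₁, hderiv hobs₂⟩)
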